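/- Let f, f̄ ∈ ℝ^E with u⁻_e < f_e < u⁺_e and u⁻_e < f̄_e < u⁺_e for all e, with ‖L(f)(f − f̄)‖_∞ ≤ ε for some ε ∈ (0, 1/100], with c^⊤f̄ > F*, and let r > 0 satisfy r ≈_{1+ε} (c^⊤f̄ − F*). Define g̃ ∈ ℝ^E by g̃_e := 20m·c_e/r + α·(u⁺_e − f_e)^{−1−α} − α·(f_e − u⁻_e)^{−1−α}. Then ‖L(f)^{−1}(g̃ − ((c^⊤f̄ − F*)/r)·g(f̄))‖_∞ ≤ 6αε. -/

import Mathlib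

open Finset

noncomputable section

/-- The `v`-entry of `Bᵀ f`, where `B` is the edge-vertex incidence matrix of the
directed graph with edge maps `tail, head`. -/
def excess {V E : Type} [Fintype E] [DecidableEq V] (tail head : E → V)
    (f : E → ℝ) (v : V) : ℝ :=
  ∑ e, f e * ((if tail e = v then (1 : ℝ) else 0) - (if head e = v then 1 else 0))

/-- Feasibility for the min-cost flow instance: `Bᵀ f = d` and `lo ≤ f ≤ hi`. -/
def IsFeasible {V E : Type} [Fintype E] [DecidableEq V] (tail head : E → V)
    (d : V → ℝ) (lo hi : E → ℝ) (f : E → ℝ) : Prop :=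
  (∀ v, excess tail head f v = d v) ∧ ∀ e, lo e ≤ f e ∧ f e ≤ hi e

/-- Cost `cᵀ f` of a flow. -/
def fcost {E : Type} [Fintype E] (c f : E → ℝ) : ℝ := ∑ e, c e * f e

/-- The barrier parameter `α = 1/(1000 log (m U))`. -/
def fAlpha (m : ℕ) (U : ℝ) : ℝ := 1 / (1000 * Real.log (m * U))

/-- The potential `Φ(f)`. -/
def fPhi {E : Type} [Fintype E] (m : ℕ) (U Fstar : ℝ) (c lo hi f : E → ℝ) : ℝ :=
  20 * m * Real.log (fcost c f - Fstar)
    + ∑ e, ((hi e - f e) ^ (-fAlpha m U) + (f e - lo e) ^ (-fAlpha m U))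

/-- The length `ℓ(f)_e = (u⁺_e - f_e)^{-1-α} + (f_e - u⁻_e)^{-1-α}`. -/
def flen {E : Type} (m : ℕ) (U : ℝ) (lo hi f : E → ℝ) (e : E) : ℝ :=
  (hi e - f e) ^ (-1 - fAlpha m U) + (f e - lo e) ^ (-1 - fAlpha m U)

/-- The gradient `g(f)_e = 20m (cᵀf - F*)⁻¹ c_e + α (u⁺_e - f_e)^{-1-α} - α (f_e - u⁻_e)^{-1-α}`. -/
def fgrad {E : Type} [Fintype E] (m : ℕ) (U Fstar : ℝ) (c lo hi f : E → ℝ) (e : E) : ℝ :=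
  20 * m * (fcost c f - Fstar)⁻¹ * c e
    + fAlpha m U * (hi e - f e) ^ (-1 - fAlpha m U)
    - fAlpha m U * (f e - lo e) ^ (-1 - fAlpha m U)

/-!
Each slack `x` of `f` satisfies `x ≤ m * U`, so `x ^ α ≤ 2`, and closeness of `f` and `f̄` in the
norm weighted by `ℓ(f) ≥ x ^ (-1 - α)` forces the corresponding slack `y` of `f̄` to satisfy
`|x - y| ≤ 2 * ε * x`. Since `-1 - α ∈ [-2, 0]`, the powers `x ^ (-1 - α)` and `s * y ^ (-1 - α)`
with `s ≈_{1 + ε} 1` then differ by a factor in `[1 - 6 * ε, 1 + 6 * ε]`. In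
`g̃ - ((cᵀf̄ - F*) / r) g(f̄)` the cost terms cancel exactly, leaving `α` times two such differences,
with `s = (cᵀf̄ - F*) / r`.
-/

section Rpow

variable {x y p s ε : ℝ}

theorem rpow_le_rpow_mul_rpow_of_mul_le {k q : ℝ} (hx : 0 < x) (hk : 0 < k) (hk1 : k ≤ 1)
    (hxy : k * x ≤ y) (hqp : q ≤ p) (hp : p ≤ 0) : y ^ p ≤ k ^ q * x ^ p :=
  calc y ^ p ≤ (k * x) ^ p := Real.rpow_le_rpow_of_nonpos (by positivity) hxy hp
    _ = k ^ p * x ^ p := Real.mul_rpow hk.le hx.le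
    _ ≤ k ^ q * x ^ p := by
      gcongr ?_ * _
      exact Real.rpow_le_rpow_of_exponent_ge hk hk1 hqp

theorem rpow_mul_rpow_le_of_le_mul {k q : ℝ} (hy : 0 < y) (hk : 1 ≤ k)
    (hxy : y ≤ k * x) (hqp : q ≤ p) (hp : p ≤ 0) : k ^ q * x ^ p ≤ y ^ p := by
  have hk0 : 0 < k := by positivity
  have h : x ^ p ≤ k⁻¹ ^ q * y ^ p :=
    rpow_le_rpow_mul_rpow_of_mul_le hy (inv_pos.2 hk0) (inv_le_one_of_one_le₀ hk)
      ((inv_mul_le_iff₀ hk0).2 hxy) hqp hp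
  rwa [Real.inv_rpow hk0.le, le_inv_mul_iff₀ (by positivity)] at h

theorem one_add_mul_one_sub_two_mul_rpow_neg_two_le (hε0 : 0 ≤ ε) (hε : ε ≤ 1 / 20) :
    (1 + ε) * (1 - 2 * ε) ^ (-2 : ℝ) ≤ 1 + 6 * ε := by
  have h : 0 < 1 - 2 * ε := by linarith
  rw [Real.rpow_neg h.le, Real.rpow_two, mul_inv_le_iff₀ (by positivity)]
  nlinarith [mul_nonneg hε0 (sub_nonneg.2 hε), pow_nonneg hε0 3]

theorem one_sub_six_mul_le_inv_mul_rpow_neg_two (hε0 : 0 ≤ ε) :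
    1 - 6 * ε ≤ (1 + ε)⁻¹ * (1 + 2 * ε) ^ (-2 : ℝ) := by
  rw [Real.rpow_neg (by positivity), Real.rpow_two, ← mul_inv, ← one_div,
    le_div_iff₀ (by positivity)]
  nlinarith [pow_nonneg hε0 2, pow_nonneg hε0 3, pow_nonneg hε0 4]

theorem abs_rpow_sub_mul_rpow_le (hx : 0 < x) (hε : ε ≤ 1 / 20) (hxy : |x - y| ≤ 2 * ε * x)
    (hs : (1 + ε)⁻¹ ≤ s) (hs' : s ≤ 1 + ε) (hp : -2 ≤ p) (hp0 : p ≤ 0) :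
    |x ^ p - s * y ^ p| ≤ 6 * ε * x ^ p := by
  have hε0 : 0 ≤ ε := by
    have := (abs_nonneg _).trans hxy
    linarith [nonneg_of_mul_nonneg_left this hx]
  obtain ⟨hlo, hhi⟩ := abs_le.1 hxy
  have hy_ge : (1 - 2 * ε) * x ≤ y := by linarith
  have hy_le : y ≤ (1 + 2 * ε) * x := by linarith
  have hk : 0 < 1 - 2 * ε := by linarith
  have hy : 0 < y := (mul_pos hk hx).trans_le hy_ge
  have hs0 : 0 ≤ s := le_trans (by positivity) hs
  have hupper : s * y ^ p ≤ (1 + 6 * ε) * x ^ p :=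
    calc s * y ^ p ≤ (1 + ε) * ((1 - 2 * ε) ^ (-2 : ℝ) * x ^ p) := by
          gcongr
          exact rpow_le_rpow_mul_rpow_of_mul_le hx hk (by linarith) hy_ge hp hp0
      _ = (1 + ε) * (1 - 2 * ε) ^ (-2 : ℝ) * x ^ p := by ring
      _ ≤ (1 + 6 * ε) * x ^ p := by
          gcongr
          exact one_add_mul_one_sub_two_mul_rpow_neg_two_le hε0 hε
  have hlower : (1 - 6 * ε) * x ^ p ≤ s * y ^ p :=
    calc (1 - 6 * ε) * x ^ p ≤ (1 + ε)⁻¹ * (1 + 2 * ε) ^ (-2 : ℝ) * x ^ p := by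
          gcongr
          exact one_sub_six_mul_le_inv_mul_rpow_neg_two hε0
      _ = (1 + ε)⁻¹ * ((1 + 2 * ε) ^ (-2 : ℝ) * x ^ p) := by ring
      _ ≤ s * y ^ p := by
          gcongr
          exact rpow_mul_rpow_le_of_le_mul hy (by linarith) hy_le hp hp0
  rw [abs_le]
  constructor <;> linarith

end Rpow

section Slack

variable {m : ℕ} {U x y s ε : ℝ}

theorem fAlpha_nonneg (hmU : 1 ≤ m * U) : 0 ≤ fAlpha m U := by
  have := Real.log_nonneg hmU
  unfold fAlpha
  positivity

theorem fAlpha_le_one (hmU : 2 ≤ m * U) : fAlpha m U ≤ 1 := by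
  have hlog : Real.log 2 ≤ Real.log (m * U) := Real.log_le_log two_pos hmU
  have hlog2 := Real.log_two_gt_d9
  rw [fAlpha, div_le_one (by linarith)]
  linarith

theorem rpow_fAlpha_le_two (hmU : 1 < m * U) (hx : 0 < x) (hxmU : x ≤ m * U) :
    x ^ fAlpha m U ≤ 2 := by
  have hlog : Real.log (m * U) ≠ 0 := (Real.log_pos hmU).ne'
  calc x ^ fAlpha m U ≤ (m * U) ^ fAlpha m U :=
        Real.rpow_le_rpow hx.le hxmU (fAlpha_nonneg hmU.le)
    _ = Real.exp (1 / 1000) := by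
        rw [Real.rpow_def_of_pos (one_pos.trans hmU), fAlpha]
        field_simp
    _ ≤ 2 := by
        rw [← Real.le_log_iff_exp_le two_pos]
        linarith [Real.log_two_gt_d9]

theorem abs_slack_sub_le (hmU : 1 < m * U) (hx : 0 < x) (hxmU : x ≤ m * U)
    (hxy : x ^ (-1 - fAlpha m U) * |x - y| ≤ ε) : |x - y| ≤ 2 * ε * x := by
  have hε0 : 0 ≤ ε := le_trans (by positivity) hxy
  have hexp : -1 - fAlpha m U = -(1 + fAlpha m U) := by ring
  rw [hexp, Real.rpow_neg hx.le, inv_mul_le_iff₀ (by positivity)] at hxy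
  calc |x - y| ≤ x ^ (1 + fAlpha m U) * ε := hxy
    _ = x * x ^ fAlpha m U * ε := by rw [Real.rpow_add hx, Real.rpow_one]
    _ ≤ x * 2 * ε := by
        gcongr
        exact rpow_fAlpha_le_two hmU hx hxmU
    _ = 2 * ε * x := by ring

theorem abs_slack_rpow_sub_mul_rpow_le (hmU : 2 ≤ m * U) (hx : 0 < x) (hxmU : x ≤ m * U)
    (hε : ε ≤ 1 / 20) (hxy : x ^ (-1 - fAlpha m U) * |x - y| ≤ ε)
    (hs : (1 + ε)⁻¹ ≤ s) (hs' : s ≤ 1 + ε) :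
    |x ^ (-1 - fAlpha m U) - s * y ^ (-1 - fAlpha m U)| ≤ 6 * ε * x ^ (-1 - fAlpha m U) := by
  have hα0 : 0 ≤ fAlpha m U := fAlpha_nonneg (by linarith)
  have hα1 : fAlpha m U ≤ 1 := fAlpha_le_one hmU
  exact abs_rpow_sub_mul_rpow_le hx hε (abs_slack_sub_le (by linarith) hx hxmU hxy) hs hs'
    (by linarith) (by linarith)

end Slack

section Gradient

variable {E : Type} {m : ℕ} {U Fstar r ε : ℝ} {c lo hi f fb : E → ℝ} {e : E}

/-- The approximate gradient `g̃`: the barrier terms of `fgrad` at a possibly outdated flow `f`,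
with an estimate `r` in place of the optimality gap `cᵀf - F*`. -/
def lazyGrad (m : ℕ) (U r : ℝ) (c lo hi f : E → ℝ) (e : E) : ℝ :=
  20 * m * c e / r + fAlpha m U * (hi e - f e) ^ (-1 - fAlpha m U)
    - fAlpha m U * (f e - lo e) ^ (-1 - fAlpha m U)

theorem lazyGrad_sub_mul_fgrad [Fintype E] (hgap : fcost c fb - Fstar ≠ 0) :
    lazyGrad m U r c lo hi f e - (fcost c fb - Fstar) / r * fgrad m U Fstar c lo hi fb e =
      fAlpha m U *
        (((hi e - f e) ^ (-1 - fAlpha m U)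
            - (fcost c fb - Fstar) / r * (hi e - fb e) ^ (-1 - fAlpha m U))
          - ((f e - lo e) ^ (-1 - fAlpha m U)
            - (fcost c fb - Fstar) / r * (fb e - lo e) ^ (-1 - fAlpha m U))) := by
  have hcost : (fcost c fb - Fstar) / r * (20 * m * (fcost c fb - Fstar)⁻¹ * c e) =
      20 * m * c e / r := by
    field_simp
  rw [lazyGrad, fgrad]
  linear_combination -hcost

theorem rpow_mul_abs_sub_le_of_flen_mul_le (hf : lo e < f e ∧ f e < hi e)
    (hclose : |flen m U lo hi f e * (f e - fb e)| ≤ ε) :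
    (hi e - f e) ^ (-1 - fAlpha m U) * |hi e - f e - (hi e - fb e)| ≤ ε ∧
      (f e - lo e) ^ (-1 - fAlpha m U) * |f e - lo e - (fb e - lo e)| ≤ ε := by
  have hu : 0 ≤ (hi e - f e) ^ (-1 - fAlpha m U) := Real.rpow_nonneg (by linarith) _
  have hl : 0 ≤ (f e - lo e) ^ (-1 - fAlpha m U) := Real.rpow_nonneg (by linarith) _
  rw [sub_sub_sub_cancel_left, abs_sub_comm (fb e), sub_sub_sub_cancel_right]
  rw [flen, abs_mul, abs_of_nonneg (add_nonneg hu hl), add_mul] at hclose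
  have hu' := mul_nonneg hu (abs_nonneg (f e - fb e))
  have hl' := mul_nonneg hl (abs_nonneg (f e - fb e))
  constructor <;> linarith

theorem stmt7_general [Fintype E] (hmU : 2 ≤ m * U) (hwidth : hi e - lo e ≤ m * U)
    (hf : lo e < f e ∧ f e < hi e) (hε : ε ≤ 1 / 20)
    (hclose : |flen m U lo hi f e * (f e - fb e)| ≤ ε) (hgap : Fstar < fcost c fb)
    (hr : (1 + ε)⁻¹ * (fcost c fb - Fstar) ≤ r ∧ r ≤ (1 + ε) * (fcost c fb - Fstar)) :
    |lazyGrad m U r c lo hi f e - (fcost c fb - Fstar) / r * fgrad m U Fstar c lo hi fb e|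
      ≤ 6 * fAlpha m U * ε * flen m U lo hi f e := by
  have hε0 : 0 ≤ ε := (abs_nonneg _).trans hclose
  have hgap0 : 0 < fcost c fb - Fstar := sub_pos.2 hgap
  have hr0 : 0 < r := lt_of_lt_of_le (by positivity) hr.1
  have hs : (1 + ε)⁻¹ ≤ (fcost c fb - Fstar) / r := by
    rw [le_div_iff₀ hr0, inv_mul_le_iff₀ (by positivity)]
    exact hr.2
  have hs' : (fcost c fb - Fstar) / r ≤ 1 + ε := by
    rw [div_le_iff₀ hr0, ← inv_mul_le_iff₀ (by positivity)]
    exact hr.1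
  obtain ⟨hu, hl⟩ := rpow_mul_abs_sub_le_of_flen_mul_le hf hclose
  have hupper := abs_slack_rpow_sub_mul_rpow_le hmU (by linarith) (by linarith) hε hu hs hs'
  have hlower := abs_slack_rpow_sub_mul_rpow_le hmU (by linarith) (by linarith) hε hl hs hs'
  have hα0 : 0 ≤ fAlpha m U := fAlpha_nonneg (by linarith)
  rw [lazyGrad_sub_mul_fgrad hgap0.ne', abs_mul, abs_of_nonneg hα0]
  calc _ ≤ fAlpha m U * (6 * ε * (hi e - f e) ^ (-1 - fAlpha m U)
          + 6 * ε * (f e - lo e) ^ (-1 - fAlpha m U)) := by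
        gcongr
        exact (abs_sub _ _).trans (add_le_add hupper hlower)
    _ = 6 * fAlpha m U * ε * flen m U lo hi f e := by
        rw [flen]
        ring

end Gradient

/-- gradient stability: the lazily-updated gradient `g̃` defined from `r`
approximates the rescaled true gradient at `f̄` to within `6αε` in the `L(f)⁻¹`-weighted
sup norm. -/
theorem stmt7
    {V E : Type} [Fintype V] [Fintype E] [DecidableEq V]
    (tail head : E → V)
    (m : ℕ) (hmcard : m = Fintype.card E) (hm : 2 ≤ m)
    (U : ℝ) (hU : 2 ≤ U)
    (d : V → ℝ) (c lo hi : E → ℝ)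
    (hcap : ∀ e, -U ≤ lo e ∧ lo e < hi e ∧ hi e ≤ U)
    (Fstar : ℝ)
    (hFstar : ∃ f0, IsFeasible tail head d lo hi f0 ∧ fcost c f0 = Fstar ∧
      ∀ f', IsFeasible tail head d lo hi f' → Fstar ≤ fcost c f')
    (f fb : E → ℝ)
    (hfs : ∀ e, lo e < f e ∧ f e < hi e)
    (hfbs : ∀ e, lo e < fb e ∧ fb e < hi e)
    (ε : ℝ) (hε : 0 < ε ∧ ε ≤ 1 / 100)
    (hclose : ∀ e, |flen m U lo hi f e * (f e - fb e)| ≤ ε)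
    (hfbc : Fstar < fcost c fb)
    (r : ℝ) (hr : 0 < r)
    (hrapp : (1 + ε)⁻¹ * (fcost c fb - Fstar) ≤ r ∧ r ≤ (1 + ε) * (fcost c fb - Fstar)) :
    ∀ e,
      |(20 * m * c e / r + fAlpha m U * (hi e - f e) ^ (-1 - fAlpha m U)
            - fAlpha m U * (f e - lo e) ^ (-1 - fAlpha m U))
          - (fcost c fb - Fstar) / r * fgrad m U Fstar c lo hi fb e|
        ≤ 6 * fAlpha m U * ε * flen m U lo hi f e := by
  intro e
  have hmU : 2 * U ≤ m * U := by gcongr; exact_mod_cast hm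
  exact stmt7_general (by linarith) (by linarith [hcap e]) (hfs e) (by linarith) (hclose e) hfbc
    hrapp
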